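/- The sequence (n/ln n)·(B_n/E_n − 1) converges to −1/12 as n → ∞. -/

import Mathlib

/-- Principal branch of the Lambert W function on `[0, ∞)`: for `x ≥ 0`,
`lambertW x` is the unique `y ≥ 0` with `y * exp y = x`. -/
noncomputable def lambertW (x : ℝ) : ℝ := Function.invFun (fun y : ℝ => y * Real.exp y) x

/-- Bell numbers: `Bell 0 = 1` and `Bell (n+1) = ∑_{k=0}^{n} C(n,k) * Bell k`. -/
def Bell : ℕ → ℕ
  | 0 => 1
  | n + 1 => ∑ k ∈ (Finset.range (n + 1)).attach, (n.choose k.1) * Bell k.1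
decreasing_by exact Finset.mem_range.mp k.2

/-- `E n = n! * exp(e^R - 1) / (R^n * sqrt(2π(n+1)(R+1)))` with `R = W(n+1)`. -/
noncomputable def E (n : ℕ) : ℝ :=
  (Nat.factorial n : ℝ) * Real.exp (Real.exp (lambertW (n + 1)) - 1) /
    ((lambertW (n + 1)) ^ n * Real.sqrt (2 * Real.pi * (n + 1) * (lambertW (n + 1) + 1)))

open Filter Topology MeasureTheory Real Finset
open Complex (I)
open scoped Complex
open Polynomial (X aeval derivative)

/-!
Apply Cauchy's formula to `exp (exp z - 1)` on the circle `|z| = R`, where `R e^R = n + 1`. There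
`e^z` is `e^R` times the characteristic function `H` of the Poisson law of mean `R`, and the Taylor
coefficients of `H` are the Touchard polynomials `T_k(R) ~ R^k`. In the variable
`u = R e^{R/2} θ` the integrand is `e^{-(1 + 1/R) u²/2}` times `e^x cos y`, with
`e^R x → u⁴/24` and `e^{R/2} y → -u³/6`, so its relative error is `e^{-R} (u⁴/24 - u⁶/72)` to first
order. Against the Gaussian this averages to `e^{-R} (3/24 - 15/72) = -e^{-R}/12`, and
`e^R = (n + 1)/R ~ n / log n`.
-/

/-! ### Taylor's inequality -/

section Taylor

variable {F : Type*} [NormedAddCommGroup F] [NormedSpace ℝ F]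

lemma hasDerivAt_sum_pow_div_factorial_smul (a : ℕ → F) (n : ℕ) (x : ℝ) :
    HasDerivAt (fun t : ℝ => ∑ k ∈ range (n + 1), (t ^ k / k.factorial) • a k)
      (∑ k ∈ range n, (x ^ k / k.factorial) • a (k + 1)) x := by
  simp only [sum_range_succ' _ n, pow_zero]
  refine .add_const _ (.fun_sum fun k _ => ?_)
  convert! ((hasDerivAt_pow (k + 1) x).div_const ((k + 1).factorial : ℝ)).smul_const (a (k + 1))
    using 2
  push_cast [Nat.factorial_succ]
  field_simp

lemma norm_sub_sum_iteratedDeriv_le_of_nonneg {f : ℝ → F} {n : ℕ} {C x : ℝ}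
    (hf : ContDiff ℝ n f) (hC : ∀ t, ‖iteratedDeriv n f t‖ ≤ C) (hx : 0 ≤ x) :
    ‖f x - ∑ k ∈ range n, (x ^ k / k.factorial) • iteratedDeriv k f 0‖
      ≤ C * x ^ n / n.factorial := by
  induction n generalizing f x with
  | zero => simpa using hC x
  | succ n ih =>
    have hderiv (t : ℝ) : HasDerivAt
        (fun t => f t - ∑ k ∈ range (n + 1), (t ^ k / k.factorial) • iteratedDeriv k f 0)
        (deriv f t - ∑ k ∈ range n, (t ^ k / k.factorial) • iteratedDeriv k (deriv f) 0) t := by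
      simp only [← iteratedDeriv_succ']
      exact (hf.differentiable (by simp) t).hasDerivAt.sub
        (hasDerivAt_sum_pow_div_factorial_smul (fun k => iteratedDeriv k f 0) n t)
    have hbound (t : ℝ) : HasDerivAt (fun t => C * t ^ (n + 1) / (n + 1).factorial)
        (C * t ^ n / n.factorial) t := by
      convert! ((hasDerivAt_pow (n + 1) t).const_mul C).div_const ((n + 1).factorial : ℝ) using 1
      push_cast [Nat.factorial_succ]
      field_simp
    refine image_norm_le_of_norm_deriv_right_le_deriv_boundary (a := 0) (b := x)
      (fun t _ => (hderiv t).continuousAt.continuousWithinAt)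
      (fun t _ => (hderiv t).hasDerivWithinAt) ?_ hbound (fun t ht => ?_) ⟨hx, le_rfl⟩
    · simp [sum_range_succ']
    · exact ih (hf.iterate_deriv' n 1) (fun u => by simpa [iteratedDeriv_succ'] using hC u) ht.1

lemma norm_sub_sum_iteratedDeriv_le {f : ℝ → F} {n : ℕ} {C : ℝ} (hf : ContDiff ℝ n f)
    (hC : ∀ t, ‖iteratedDeriv n f t‖ ≤ C) (x : ℝ) :
    ‖f x - ∑ k ∈ range n, (x ^ k / k.factorial) • iteratedDeriv k f 0‖
      ≤ C * |x| ^ n / n.factorial := by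
  rcases le_total 0 x with hx | hx
  · simpa only [abs_of_nonneg hx] using norm_sub_sum_iteratedDeriv_le_of_nonneg hf hC hx
  · have h := norm_sub_sum_iteratedDeriv_le_of_nonneg (f := fun t => f (-t)) (C := C)
      (hf.comp contDiff_neg) (fun t => by simpa [iteratedDeriv_comp_neg, norm_smul] using hC (-t))
      (neg_nonneg.2 hx)
    convert! h using 3
    · simp
    · refine sum_congr rfl fun k _ => ?_
      rw [iteratedDeriv_comp_neg, smul_smul, neg_zero, div_mul_eq_mul_div, ← mul_pow]
      simp
    · rw [abs_of_nonpos hx]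

end Taylor

/-! ### Limits and integrals -/

lemma norm_integral_sub_integral_le_of_norm_le {F : Type*} [NormedAddCommGroup F] [NormedSpace ℝ F]
    {f : ℝ → F} {a b ε : ℝ} (hf : Continuous f) (ha : 0 ≤ a) (hab : a ≤ b)
    (hε : ∀ x, a ≤ |x| → |x| ≤ b → ‖f x‖ ≤ ε) :
    ‖(∫ x in -b..b, f x) - ∫ x in -a..a, f x‖ ≤ 2 * (b - a) * ε := by
  have hInt (c d : ℝ) : IntervalIntegrable f volume c d := hf.intervalIntegrable c d
  have hright : ‖∫ x in a..b, f x‖ ≤ ε * |b - a| := by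
    refine intervalIntegral.norm_integral_le_of_norm_le_const fun x hx => ?_
    rw [Set.uIoc_of_le hab] at hx
    have habs : |x| = x := abs_of_nonneg (ha.trans hx.1.le)
    exact hε x (hx.1.le.trans_eq habs.symm) (habs.trans_le hx.2)
  have hleft : ‖∫ x in -b..-a, f x‖ ≤ ε * |-a - -b| := by
    refine intervalIntegral.norm_integral_le_of_norm_le_const fun x hx => ?_
    rw [Set.uIoc_of_le (neg_le_neg hab)] at hx
    have habs : |x| = -x := abs_of_nonpos (by linarith [hx.2])
    exact hε x (by linarith [hx.2]) (by linarith [hx.1])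
  have hsplit : (∫ x in -b..b, f x) - ∫ x in -a..a, f x
      = (∫ x in -b..-a, f x) + ∫ x in a..b, f x := by
    rw [← intervalIntegral.integral_add_adjacent_intervals (hInt (-b) (-a)) (hInt (-a) b),
      ← intervalIntegral.integral_add_adjacent_intervals (hInt (-a) a) (hInt a b)]
    abel
  rw [hsplit]
  calc _ ≤ ε * |-a - -b| + ε * |b - a| := norm_add_le_of_le hleft hright
    _ = 2 * (b - a) * ε := by
      rw [show -a - -b = b - a by ring, abs_of_nonneg (sub_nonneg.2 hab)]
      ring

lemma tendsto_of_abs_sub_le_div_atTop {α : Type*} {l : Filter α} {f g h : α → ℝ} {C p : ℝ}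
    (hg : Tendsto g l (𝓝 p)) (hh : Tendsto h l atTop) (hfg : ∀ᶠ i in l, |f i - g i| ≤ C / h i) :
    Tendsto f l (𝓝 p) := by
  simpa using (squeeze_zero_norm' hfg (tendsto_const_nhds.div_atTop hh)).add hg

lemma tendsto_smul_sub_of_hasDerivAt {F : Type*} [NormedAddCommGroup F] [NormedSpace ℝ F]
    {α : Type*} {l : Filter α} {f : ℝ → F} {f' : F} {a p : ℝ} {c d : α → ℝ}
    (hf : HasDerivAt f f' a) (hd : Tendsto d l (𝓝 0))
    (hcd : Tendsto (fun i => c i * d i) l (𝓝 p)) :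
    Tendsto (fun i => c i • (f (a + d i) - f a)) l (𝓝 (p • f')) := by
  simpa using hf.hasFDerivAt.hasFDerivWithinAt.lim (s := Set.univ) hd (by simp) hcd

lemma tendsto_zero_of_tendsto_mul {α : Type*} {l : Filter α} {c d : α → ℝ} {p : ℝ}
    (hc : Tendsto c l atTop) (hcd : Tendsto (fun i => c i * d i) l (𝓝 p)) :
    Tendsto d l (𝓝 0) := by
  refine (hcd.div_atTop hc).congr' ?_
  filter_upwards [hc.eventually_gt_atTop 0] with i hi
  field_simp

lemma tendsto_sq_mul_exp_mul_cos_sub_one {α : Type*} {l : Filter α} {m x y : α → ℝ} {p q : ℝ}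
    (hm : Tendsto m l atTop) (hx : Tendsto (fun i => m i ^ 2 * x i) l (𝓝 p))
    (hy : Tendsto (fun i => m i * y i) l (𝓝 q)) :
    Tendsto (fun i => m i ^ 2 * (exp (x i) * cos (y i) - 1)) l (𝓝 (p - q ^ 2 / 2)) := by
  have hx₀ := tendsto_zero_of_tendsto_mul ((tendsto_pow_atTop two_ne_zero).comp hm) hx
  have hy₀ := tendsto_zero_of_tendsto_mul hm hy
  have hexp : Tendsto (fun i => m i ^ 2 * (exp (x i) - 1)) l (𝓝 p) := by
    simpa using tendsto_smul_sub_of_hasDerivAt (hasDerivAt_exp 0) hx₀ hx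
  have hsin : Tendsto (fun i => m i * sin (y i / 2)) l (𝓝 (q / 2)) := by
    simpa using tendsto_smul_sub_of_hasDerivAt (hasDerivAt_sin 0) (by simpa using hy₀.div_const 2)
      (by simpa only [mul_div_assoc] using hy.div_const 2)
  have hcos : Tendsto (fun i => cos (y i)) l (𝓝 1) := by
    simpa [Function.comp_def] using (continuous_cos.tendsto 0).comp hy₀
  convert! (hexp.mul hcos).sub ((hsin.pow 2).const_mul 2) using 2 with i
  · rw [mul_pow, sin_sq_eq_half_sub, mul_div_cancel₀ _ two_ne_zero]
    ring
  · ring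

lemma abs_exp_mul_cos_sub_one_le (x y : ℝ) :
    |exp x * cos y - 1| ≤ |x| * exp |x| + y ^ 2 / 2 := by
  have hexp : |exp x - 1| ≤ |x| * exp |x| := by
    simpa [← Complex.ofReal_exp, ← Complex.ofReal_one, ← Complex.ofReal_sub, Complex.norm_real]
      using Complex.norm_exp_sub_sum_le_norm_mul_exp (x : ℂ) 1
  have hcos : |cos y - 1| ≤ y ^ 2 / 2 :=
    abs_le.2 ⟨by linarith [one_sub_sq_div_two_le_cos (x := y)],
      by linarith [cos_le_one y, sq_nonneg y]⟩
  calc |exp x * cos y - 1| = |(exp x - 1) * cos y + (cos y - 1)| := by congr 1; ring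
    _ ≤ |exp x - 1| * |cos y| + |cos y - 1| := by rw [← abs_mul]; exact abs_add_le _ _
    _ ≤ |exp x - 1| * 1 + |cos y - 1| := by gcongr; exact abs_cos_le_one y
    _ ≤ |x| * exp |x| + y ^ 2 / 2 := by rw [mul_one]; exact add_le_add hexp hcos

lemma integrable_pow_mul_exp_neg_mul_sq (k : ℕ) {b : ℝ} (hb : 0 < b) :
    Integrable (fun x : ℝ => x ^ k * exp (-b * x ^ 2)) := by
  simpa [rpow_natCast] using
    integrable_rpow_mul_exp_neg_mul_sq hb (s := (k : ℝ)) (by linarith [k.cast_nonneg (α := ℝ)])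

open scoped Nat in
lemma integral_pow_two_mul_mul_exp_neg_sq_div_two (k : ℕ) :
    ∫ x : ℝ, x ^ (2 * k) * exp (-x ^ 2 / 2) = (2 * k - 1)‼ * √(2 * π) := by
  have heven := integral_comp_abs (f := fun x : ℝ => x ^ (2 * k) * exp (-x ^ 2 / 2))
  simp only [pow_mul, sq_abs] at heven ⊢
  have hhalf := integral_rpow_mul_exp_neg_mul_rpow (p := 2) (q := 2 * k) (b := 1 / 2)
    (by norm_num) (by linarith [k.cast_nonneg (α := ℝ)]) (by norm_num)
  have hpow : (1 / 2 : ℝ) ^ (-(2 * k + 1) / 2 : ℝ) = 2 ^ k * √2 := by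
    rw [neg_div, one_div, inv_rpow zero_le_two, rpow_neg zero_le_two, inv_inv, add_div,
      mul_div_cancel_left₀ _ two_ne_zero, rpow_add zero_lt_two, rpow_natCast, sqrt_eq_rpow]
  rw [hpow, add_div, mul_div_cancel_left₀ _ (two_ne_zero' ℝ), Gamma_nat_add_half] at hhalf
  calc _ = 2 * ∫ x in Set.Ioi (0 : ℝ), x ^ (2 * k : ℝ) * exp (-(1 / 2) * x ^ (2 : ℝ)) := by
        rw [heven]
        congr 1
        refine setIntegral_congr_fun measurableSet_Ioi fun x hx => ?_
        simp only [rpow_mul hx.le, rpow_two, rpow_natCast]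
        congr 2
        ring
    _ = _ := by
        rw [hhalf, sqrt_mul zero_le_two]
        field_simp

/-! ### Cauchy's formula for the Bell numbers -/

lemma iteratedDeriv_eq_integral_circleMap {F : Type*} [NormedAddCommGroup F] [NormedSpace ℂ F]
    [CompleteSpace F] {f : ℂ → F} {c : ℂ} {R : ℝ} (hR : 0 < R)
    (hf : DifferentiableOn ℂ f (Metric.closedBall c R)) (n : ℕ) :
    iteratedDeriv n f c = ((n.factorial / (2 * π * R ^ n) : ℝ) : ℂ) •
      ∫ θ in -π..π, cexp (-(n * θ * I)) • f (circleMap c R θ) := by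
  have hR' : (R : ℂ) ≠ 0 := mod_cast hR.ne'
  have hintegrand (θ : ℝ) : deriv (circleMap c R) θ • (1 / (circleMap c R θ - c) ^ (n + 1)) •
      f (circleMap c R θ) = (I / R ^ n) • cexp (-(n * θ * I)) • f (circleMap c R θ) := by
    have hexp : cexp (-(n * θ * I)) = (cexp (θ * I) ^ n)⁻¹ := by
      rw [Complex.exp_neg, ← Complex.exp_nat_mul, mul_assoc]
    rw [deriv_circleMap, smul_smul, smul_smul, circleMap_sub_center, circleMap_zero, hexp]
    congr 1
    field_simp
    ring
  have hperiodic : Function.Periodic (fun θ : ℝ => cexp (-(n * θ * I)) • f (circleMap c R θ))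
      (2 * π) := by
    intro θ
    simp only [periodic_circleMap c R θ]
    congr 1
    rw [Complex.exp_eq_exp_iff_exists_int]
    exact ⟨-n, by push_cast; ring⟩
  have hcauchy := hf.circleIntegral_one_div_sub_center_pow_smul hR n
  have hshift := hperiodic.intervalIntegral_add_eq 0 (-π)
  rw [zero_add, show -π + 2 * π = π by ring] at hshift
  rw [circleIntegral] at hcauchy
  simp only [hintegrand] at hcauchy
  rw [intervalIntegral.integral_smul, hshift] at hcauchy
  rw [← inv_smul_smul₀ (a := (2 * π * I / n.factorial : ℂ))
    (by simp [pi_ne_zero, Nat.factorial_ne_zero]) (iteratedDeriv n f c), ← hcauchy, smul_smul]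
  congr 1
  have := Complex.I_ne_zero
  push_cast
  field_simp

lemma Bell_succ (n : ℕ) : Bell (n + 1) = ∑ k ∈ range (n + 1), n.choose k * Bell k := by
  rw [Bell]
  exact sum_attach (range (n + 1)) fun k => n.choose k * Bell k

lemma iteratedDeriv_cexp_cexp_sub_one_zero (n : ℕ) :
    iteratedDeriv n (fun z => cexp (cexp z - 1)) 0 = Bell n := by
  induction n using Nat.strong_induction_on with
  | _ n ih =>
    cases n with
    | zero => simp [Bell]
    | succ n =>
      have hderiv : deriv (fun z => cexp (cexp z - 1)) = (fun z => cexp (cexp z - 1)) * cexp :=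
        funext fun z => ((Complex.hasDerivAt_exp z).sub_const 1).cexp.deriv
      rw [iteratedDeriv_succ', hderiv, iteratedDeriv_mul (by fun_prop) (by fun_prop), Bell_succ]
      push_cast
      refine sum_congr rfl fun k hk => ?_
      rw [ih k (mem_range.1 hk)]
      simp [iteratedDeriv_eq_iterate]

/-- The characteristic function of the Poisson distribution of mean `R`; on the circle
`z = R e^{iθ}` one has `e^z = e^R * poissonCharFun R θ`. -/
noncomputable def poissonCharFun (R θ : ℝ) : ℂ := cexp (R * (cexp (θ * I) - 1))

/-- The argument at angle `θ` of the integrand in Cauchy's formula for the `n`-th Bell number on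
the circle of radius `R`, with `n` replaced by `R e^R - 1`, its value when `R = W(n + 1)`. -/
noncomputable def saddlePhase (R θ : ℝ) : ℝ :=
  exp R * (poissonCharFun R θ).im - (R * exp R - 1) * θ

/-- The real part of the integrand in Cauchy's formula for the Bell numbers on the circle of
radius `R`, normalised to be `1` at `θ = 0`. -/
noncomputable def saddleIntegrand (R θ : ℝ) : ℝ :=
  exp (exp R * ((poissonCharFun R θ).re - 1)) * cos (saddlePhase R θ)

lemma continuous_poissonCharFun (R : ℝ) : Continuous (poissonCharFun R) := by
  unfold poissonCharFun
  fun_prop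

lemma continuous_saddleIntegrand (R : ℝ) : Continuous (saddleIntegrand R) := by
  have := continuous_poissonCharFun R
  unfold saddleIntegrand saddlePhase
  fun_prop

lemma cexp_cexp_circleMap_sub_one (R θ : ℝ) :
    cexp (cexp (circleMap 0 R θ) - 1)
      = (exp (exp R - 1) : ℝ) * cexp (exp R * (poissonCharFun R θ - 1)) := by
  have hcirc : cexp (circleMap 0 R θ) = cexp R * poissonCharFun R θ := by
    rw [poissonCharFun, ← Complex.exp_add, circleMap_zero]
    congr 1
    ring
  rw [hcirc, Complex.ofReal_exp, ← Complex.exp_add]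
  congr 1
  push_cast
  ring

lemma re_cexp_eq_saddleIntegrand (R θ : ℝ) :
    (cexp (exp R * (poissonCharFun R θ - 1) - (R * exp R - 1 : ℝ) * θ * I)).re
      = saddleIntegrand R θ := by
  rw [Complex.exp_re, saddleIntegrand, saddlePhase]
  simp [-Complex.ofReal_exp, -Complex.ofReal_sub]

lemma Bell_eq_integral_saddleIntegrand {n : ℕ} {R : ℝ} (hR : 0 < R) (hn : R * exp R = n + 1) :
    (Bell n : ℝ) = n.factorial * exp (exp R - 1) / (2 * π * R ^ n) *
      ∫ θ in -π..π, saddleIntegrand R θ := by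
  have hentire : Differentiable ℂ fun z => cexp (cexp z - 1) := by fun_prop
  have hcauchy := iteratedDeriv_eq_integral_circleMap hR hentire.differentiableOn (c := 0) n
  have hintegrand (θ : ℝ) : cexp (-(n * θ * I)) • cexp (cexp (circleMap 0 R θ) - 1)
      = (exp (exp R - 1) : ℝ) *
        cexp (exp R * (poissonCharFun R θ - 1) - (R * exp R - 1 : ℝ) * θ * I) := by
    rw [cexp_cexp_circleMap_sub_one, hn, add_sub_cancel_right, Complex.ofReal_natCast, smul_eq_mul,
      sub_eq_add_neg _ (n * θ * I : ℂ), Complex.exp_add]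
    ring
  have hcont : Continuous fun θ : ℝ =>
      cexp (exp R * (poissonCharFun R θ - 1) - (R * exp R - 1 : ℝ) * θ * I) := by
    have := continuous_poissonCharFun R
    fun_prop
  have hre := Complex.reCLM.intervalIntegral_comp_comm
    (hcont.intervalIntegrable (μ := volume) (-π) π)
  simp only [Complex.reCLM_apply, re_cexp_eq_saddleIntegrand] at hre
  rw [iteratedDeriv_cexp_cexp_sub_one_zero] at hcauchy
  simp only [hintegrand] at hcauchy
  rw [intervalIntegral.integral_const_mul, smul_eq_mul, ← mul_assoc, ← Complex.ofReal_mul]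
    at hcauchy
  have hreal := congrArg Complex.re hcauchy
  rw [Complex.re_ofReal_mul, ← hre, Complex.natCast_re] at hreal
  rw [hreal]
  ring

/-! ### Touchard polynomials -/

lemma norm_aeval_le_aeval_norm (p : Polynomial ℕ) (z : ℂ) : ‖aeval z p‖ ≤ aeval ‖z‖ p := by
  rw [Polynomial.aeval_eq_sum_range, Polynomial.aeval_eq_sum_range]
  refine norm_sum_le_of_le _ fun k _ => ?_
  simp

lemma aeval_le_eval_one_mul_pow (p : Polynomial ℕ) {R : ℝ} (hR : 1 ≤ R) :
    aeval R p ≤ p.eval 1 * R ^ p.natDegree := by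
  rw [Polynomial.aeval_eq_sum_range, Polynomial.eval_eq_sum_range, Nat.cast_sum, sum_mul]
  refine sum_le_sum fun k hk => ?_
  rw [nsmul_eq_mul, one_pow, mul_one]
  gcongr
  exact Nat.lt_succ_iff.1 (mem_range.1 hk)

/-- The Touchard polynomials: `touchard n` evaluated at `R` is the `n`-th moment of the Poisson
distribution of mean `R`. -/
noncomputable def touchard : ℕ → Polynomial ℕ
  | 0 => 1
  | n + 1 => X * (touchard n + derivative (touchard n))

lemma monic_touchard (n : ℕ) : (touchard n).Monic := by
  induction n with
  | zero => exact Polynomial.monic_one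
  | succ n ih =>
    exact Polynomial.monic_X.mul (ih.add_of_left (Polynomial.degree_derivative_lt ih.ne_zero))

lemma natDegree_touchard (n : ℕ) : (touchard n).natDegree = n := by
  induction n with
  | zero => exact Polynomial.natDegree_one
  | succ n ih =>
    have hlt := Polynomial.degree_derivative_lt (monic_touchard n).ne_zero
    rw [touchard, Polynomial.monic_X.natDegree_mul ((monic_touchard n).add_of_left hlt),
      Polynomial.natDegree_X,
      Polynomial.natDegree_eq_of_degree_eq (Polynomial.degree_add_eq_left_of_degree_lt hlt), ih,
      add_comm]

lemma tendsto_aeval_touchard_div_pow (n : ℕ) :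
    Tendsto (fun R : ℝ => aeval R (touchard n) / R ^ n) atTop (𝓝 1) := by
  have hmap := (monic_touchard n).map (algebraMap ℕ ℝ)
  have h := ((touchard n).map (algebraMap ℕ ℝ)).div_tendsto_atTop_leadingCoeff_div_of_degree_eq
    (X ^ n) (by rw [Polynomial.degree_X_pow, Polynomial.degree_eq_natDegree hmap.ne_zero,
      (monic_touchard n).natDegree_map, natDegree_touchard])
  simpa only [hmap.leadingCoeff, Polynomial.leadingCoeff_X_pow, div_one, Polynomial.eval_pow,
    Polynomial.eval_X, Polynomial.eval_map_algebraMap] using h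

lemma eval_one_touchard_three : (touchard 3).eval 1 = 5 := by
  simp [touchard]

lemma eval_one_touchard_four : (touchard 4).eval 1 = 15 := by
  simp [touchard]

/-! ### Taylor expansion of the Poisson characteristic function -/

lemma iteratedDeriv_poissonCharFun (R : ℝ) (n : ℕ) (θ : ℝ) :
    iteratedDeriv n (poissonCharFun R) θ
      = I ^ n * aeval (R * cexp (θ * I)) (touchard n) * poissonCharFun R θ := by
  induction n generalizing θ with
  | zero => simp [touchard]
  | succ n ih =>
    have hcirc : HasDerivAt (fun t : ℝ => (R : ℂ) * cexp (t * I)) (R * (cexp (θ * I) * I)) θ := by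
      simpa using ((Complex.ofRealCLM.hasDerivAt (x := θ)).mul_const I).cexp.const_mul (R : ℂ)
    have hchar : HasDerivAt (poissonCharFun R)
        (poissonCharFun R θ * (R * (cexp (θ * I) * I))) θ := by
      unfold poissonCharFun
      simpa [mul_sub] using (hcirc.sub_const (R : ℂ)).cexp
    have hpoly := ((touchard n).hasDerivAt_aeval (R * cexp (θ * I))).comp θ hcirc
    rw [iteratedDeriv_succ, funext ih]
    refine (((hpoly.const_mul (I ^ n)).mul hchar).deriv).trans ?_
    simp only [touchard, map_mul, map_add, Polynomial.aeval_X, Function.comp_apply]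
    ring

lemma norm_poissonCharFun (R θ : ℝ) : ‖poissonCharFun R θ‖ = exp (R * (cos θ - 1)) := by
  rw [poissonCharFun, Complex.norm_exp, Complex.re_ofReal_mul, Complex.sub_re,
    Complex.exp_ofReal_mul_I_re, Complex.one_re]

/-- The Taylor polynomial at `θ = 0` of `poissonCharFun R`, with terms of degree less than `n`. -/
noncomputable def poissonCharTaylor (R : ℝ) (n : ℕ) (θ : ℝ) : ℂ :=
  ∑ k ∈ range n, (aeval R (touchard k) * θ ^ k / k.factorial : ℝ) * I ^ k

lemma norm_poissonCharFun_sub_taylor_le {R : ℝ} (hR : 0 ≤ R) (n : ℕ) (θ : ℝ) :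
    ‖poissonCharFun R θ - poissonCharTaylor R n θ‖
      ≤ aeval R (touchard n) * |θ| ^ n / n.factorial := by
  have hsmooth : ContDiff ℝ n (poissonCharFun R) := by
    have hcast : ContDiff ℝ n ((↑) : ℝ → ℂ) := Complex.ofRealCLM.contDiff
    unfold poissonCharFun
    fun_prop
  have hbound (t : ℝ) : ‖iteratedDeriv n (poissonCharFun R) t‖ ≤ aeval R (touchard n) := by
    have hnorm : ‖(R : ℂ) * cexp (t * I)‖ = R := by
      rw [norm_mul, Complex.norm_exp_ofReal_mul_I, mul_one, Complex.norm_of_nonneg hR]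
    have hle := norm_aeval_le_aeval_norm (touchard n) (R * cexp (t * I))
    rw [hnorm] at hle
    have hchar : ‖poissonCharFun R t‖ ≤ 1 := by
      rw [norm_poissonCharFun, exp_le_one_iff]
      exact mul_nonpos_of_nonneg_of_nonpos hR (by linarith [cos_le_one t])
    rw [iteratedDeriv_poissonCharFun, norm_mul, norm_mul, norm_pow, Complex.norm_I, one_pow,
      one_mul]
    exact mul_le_of_le_one_right (norm_nonneg _) hchar |>.trans hle
  rw [poissonCharTaylor]
  convert! norm_sub_sum_iteratedDeriv_le hsmooth hbound θ using 4 with k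
  rw [iteratedDeriv_poissonCharFun, poissonCharFun, Complex.ofReal_zero, zero_mul, Complex.exp_zero,
    mul_one, sub_self, mul_zero, Complex.exp_zero, mul_one, ← Complex.coe_algebraMap,
    Polynomial.aeval_algebraMap_apply, Complex.coe_algebraMap, Complex.real_smul]
  push_cast
  ring

lemma norm_poissonCharFun_sub_taylor_le_of_one_le {R : ℝ} (hR : 1 ≤ R) (n : ℕ) (θ : ℝ) :
    ‖poissonCharFun R θ - poissonCharTaylor R n θ‖
      ≤ (touchard n).eval 1 * |R * θ| ^ n / n.factorial := by
  refine (norm_poissonCharFun_sub_taylor_le (by linarith) n θ).trans ?_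
  have h := aeval_le_eval_one_mul_pow (touchard n) hR
  rw [natDegree_touchard] at h
  rw [abs_mul, mul_pow, abs_of_nonneg (by linarith : 0 ≤ R), ← mul_assoc]
  gcongr

lemma poissonCharTaylor_succ (R : ℝ) (n : ℕ) (θ : ℝ) :
    poissonCharTaylor R (n + 1) θ
      = poissonCharTaylor R n θ + (aeval R (touchard n) * θ ^ n / n.factorial : ℝ) * I ^ n :=
  sum_range_succ _ n

lemma poissonCharTaylor_three (R θ : ℝ) :
    poissonCharTaylor R 3 θ = ⟨1 - (R + R ^ 2) * θ ^ 2 / 2, R * θ⟩ := by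
  simp only [poissonCharTaylor, sum_range_succ, sum_range_zero, touchard, Complex.I_sq]
  apply Complex.ext <;> simp [-Complex.ofReal_mul, -Complex.ofReal_pow]
  ring

lemma poissonCharTaylor_four (R θ : ℝ) :
    poissonCharTaylor R 4 θ
      = ⟨1 - (R + R ^ 2) * θ ^ 2 / 2, R * θ - aeval R (touchard 3) * θ ^ 3 / 6⟩ := by
  rw [poissonCharTaylor_succ, poissonCharTaylor_three, Complex.I_pow_three]
  apply Complex.ext <;> simp [Nat.factorial, -Complex.ofReal_mul, -Complex.ofReal_pow]
  ring

lemma poissonCharTaylor_five (R θ : ℝ) :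
    poissonCharTaylor R 5 θ = ⟨1 - (R + R ^ 2) * θ ^ 2 / 2 + aeval R (touchard 4) * θ ^ 4 / 24,
        R * θ - aeval R (touchard 3) * θ ^ 3 / 6⟩ := by
  rw [poissonCharTaylor_succ, poissonCharTaylor_four, Complex.I_pow_four]
  apply Complex.ext <;> simp [Nat.factorial, -Complex.ofReal_mul, -Complex.ofReal_pow]

section Expansion

variable {R : ℝ}

lemma abs_im_poissonCharFun_sub_linear_le (hR : 1 ≤ R) (θ : ℝ) :
    |(poissonCharFun R θ).im - R * θ| ≤ 5 * |R * θ| ^ 3 / 6 := by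
  have h := (Complex.abs_im_le_norm _).trans (norm_poissonCharFun_sub_taylor_le_of_one_le hR 3 θ)
  rwa [poissonCharTaylor_three, eval_one_touchard_three] at h

lemma abs_im_poissonCharFun_sub_cubic_le (hR : 1 ≤ R) (θ : ℝ) :
    |(poissonCharFun R θ).im - (R * θ - aeval R (touchard 3) * θ ^ 3 / 6)|
      ≤ 15 * |R * θ| ^ 4 / 24 := by
  have h := (Complex.abs_im_le_norm _).trans (norm_poissonCharFun_sub_taylor_le_of_one_le hR 4 θ)
  rwa [poissonCharTaylor_four, eval_one_touchard_four] at h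

lemma abs_re_poissonCharFun_sub_quadratic_le (hR : 1 ≤ R) (θ : ℝ) :
    |(poissonCharFun R θ).re - (1 - (R + R ^ 2) * θ ^ 2 / 2)| ≤ 15 * |R * θ| ^ 4 / 24 := by
  have h := (Complex.abs_re_le_norm _).trans (norm_poissonCharFun_sub_taylor_le_of_one_le hR 4 θ)
  rwa [poissonCharTaylor_four, eval_one_touchard_four] at h

lemma abs_re_poissonCharFun_sub_quartic_le (hR : 1 ≤ R) (θ : ℝ) :
    |(poissonCharFun R θ).re
        - (1 - (R + R ^ 2) * θ ^ 2 / 2 + aeval R (touchard 4) * θ ^ 4 / 24)|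
      ≤ (touchard 5).eval 1 * |R * θ| ^ 5 / 120 := by
  have h := (Complex.abs_re_le_norm _).trans (norm_poissonCharFun_sub_taylor_le_of_one_le hR 5 θ)
  rwa [poissonCharTaylor_five] at h

end Expansion

/-! ### The rescaled integrand -/

/-- The angle `θ` on the circle of radius `R` with rescaled coordinate `u = R e^{R/2} θ`, in which
the peak of `saddleIntegrand R` has width of order one. -/
noncomputable def saddleAngle (R u : ℝ) : ℝ := u / (R * exp (R / 2))

/-- The logarithm of the modulus of Cauchy's integrand in the rescaled coordinate `u`, minus its
quadratic Taylor polynomial `-(1 + 1/R) u²/2`. -/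
noncomputable def logModulusError (R u : ℝ) : ℝ :=
  exp R * ((poissonCharFun R (saddleAngle R u)).re - 1) + (1 + 1 / R) * u ^ 2 / 2

/-- The Gaussian approximation to `saddleIntegrand R` in the rescaled coordinate `u`. -/
noncomputable def saddleGaussian (R u : ℝ) : ℝ := exp (-((1 + 1 / R) * u ^ 2 / 2))

lemma saddleIntegrand_saddleAngle (R u : ℝ) :
    saddleIntegrand R (saddleAngle R u) = saddleGaussian R u *
      (exp (logModulusError R u) * cos (saddlePhase R (saddleAngle R u))) := by
  rw [saddleIntegrand, saddleGaussian, ← mul_assoc, ← exp_add, logModulusError]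
  congr 2
  ring

lemma exp_eq_exp_half_sq (R : ℝ) : exp R = exp (R / 2) ^ 2 := by
  rw [← exp_nat_mul]
  congr 1
  ring

section Rescaled

variable {R : ℝ}

lemma mul_saddleAngle (hR : R ≠ 0) (u : ℝ) : R * saddleAngle R u = u / exp (R / 2) := by
  rw [saddleAngle]
  field_simp

lemma exp_mul_abs_logModulusError_le (hR : 1 ≤ R) (u : ℝ) :
    exp R * |logModulusError R u| ≤ 5 / 8 * u ^ 4 := by
  have hR₀ : R ≠ 0 := by linarith
  have hlog : logModulusError R u = exp R * ((poissonCharFun R (saddleAngle R u)).re -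
      (1 - (R + R ^ 2) * saddleAngle R u ^ 2 / 2)) := by
    rw [logModulusError, exp_eq_exp_half_sq R, saddleAngle]
    field_simp
    ring
  have h := abs_re_poissonCharFun_sub_quadratic_le hR (saddleAngle R u)
  rw [mul_saddleAngle hR₀, abs_div, abs_exp] at h
  rw [hlog, abs_mul, abs_exp]
  calc _ ≤ exp R * (exp R * (15 * (|u| / exp (R / 2)) ^ 4 / 24)) := by gcongr
    _ = _ := by
      rw [exp_eq_exp_half_sq R, ← (show Even 4 by decide).pow_abs u]
      field_simp
      ring

lemma abs_exp_mul_logModulusError_sub_le (hR : 1 ≤ R) (u : ℝ) :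
    |exp R * logModulusError R u - aeval R (touchard 4) / R ^ 4 * u ^ 4 / 24|
      ≤ (touchard 5).eval 1 * |u| ^ 5 / 120 / exp (R / 2) := by
  have hR₀ : R ≠ 0 := by linarith
  have hlog : exp R * logModulusError R u - aeval R (touchard 4) / R ^ 4 * u ^ 4 / 24
      = exp R ^ 2 * ((poissonCharFun R (saddleAngle R u)).re -
        (1 - (R + R ^ 2) * saddleAngle R u ^ 2 / 2
          + aeval R (touchard 4) * saddleAngle R u ^ 4 / 24)) := by
    rw [logModulusError, exp_eq_exp_half_sq R, saddleAngle]
    field_simp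
    ring
  have h := abs_re_poissonCharFun_sub_quartic_le hR (saddleAngle R u)
  rw [mul_saddleAngle hR₀, abs_div, abs_exp] at h
  rw [hlog, abs_mul, abs_pow, abs_exp]
  calc _ ≤ exp R ^ 2 * ((touchard 5).eval 1 * (|u| / exp (R / 2)) ^ 5 / 120) := by gcongr
    _ = _ := by
      rw [exp_eq_exp_half_sq R]
      field_simp

lemma exp_mul_abs_saddlePhase_le (hR : 1 ≤ R) (u : ℝ) :
    exp (R / 2) * |saddlePhase R (saddleAngle R u)| ≤ |u| + |u| ^ 3 := by
  have hR₀ : 0 < R := by linarith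
  have hphase : exp (R / 2) * saddlePhase R (saddleAngle R u)
      = u / R + exp (R / 2) ^ 3 *
        ((poissonCharFun R (saddleAngle R u)).im - R * saddleAngle R u) := by
    rw [saddlePhase, exp_eq_exp_half_sq R, saddleAngle]
    field_simp
    ring
  have h := abs_im_poissonCharFun_sub_linear_le hR (saddleAngle R u)
  nth_rw 2 [mul_saddleAngle hR₀.ne'] at h
  rw [abs_div, abs_exp] at h
  rw [← abs_exp (R / 2), ← abs_mul, hphase]
  calc _ ≤ |u| / R + exp (R / 2) ^ 3 * (5 * (|u| / exp (R / 2)) ^ 3 / 6) := by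
        refine (abs_add_le _ _).trans ?_
        rw [abs_div, abs_of_pos hR₀, abs_mul, abs_pow, abs_exp]
        gcongr
    _ = |u| / R + 5 / 6 * |u| ^ 3 := by field_simp
    _ ≤ _ := add_le_add (div_le_self (abs_nonneg u) hR) (by linarith [pow_nonneg (abs_nonneg u) 3])

lemma abs_exp_mul_saddlePhase_sub_le (hR : 1 ≤ R) (u : ℝ) :
    |exp (R / 2) * saddlePhase R (saddleAngle R u)
        - (u / R - aeval R (touchard 3) / R ^ 3 * u ^ 3 / 6)|
      ≤ 5 / 8 * u ^ 4 / exp (R / 2) := by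
  have hR₀ : R ≠ 0 := by linarith
  have hphase : exp (R / 2) * saddlePhase R (saddleAngle R u)
        - (u / R - aeval R (touchard 3) / R ^ 3 * u ^ 3 / 6)
      = exp (R / 2) ^ 3 * ((poissonCharFun R (saddleAngle R u)).im -
        (R * saddleAngle R u - aeval R (touchard 3) * saddleAngle R u ^ 3 / 6)) := by
    rw [saddlePhase, exp_eq_exp_half_sq R, saddleAngle]
    field_simp
    ring
  have h := abs_im_poissonCharFun_sub_cubic_le hR (saddleAngle R u)
  nth_rw 2 [mul_saddleAngle hR₀] at h
  rw [abs_div, abs_exp] at h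
  rw [hphase, abs_mul, abs_pow, abs_exp]
  calc _ ≤ exp (R / 2) ^ 3 * (15 * (|u| / exp (R / 2)) ^ 4 / 24) := by gcongr
    _ = _ := by
      rw [← (show Even 4 by decide).pow_abs u]
      field_simp
      ring

end Rescaled

lemma tendsto_exp_half_atTop : Tendsto (fun R : ℝ => exp (R / 2)) atTop atTop :=
  tendsto_exp_atTop.comp (tendsto_id.atTop_div_const two_pos)

lemma tendsto_exp_mul_logModulusError (u : ℝ) :
    Tendsto (fun R => exp R * logModulusError R u) atTop (𝓝 (u ^ 4 / 24)) := by
  have hmain : Tendsto (fun R : ℝ => aeval R (touchard 4) / R ^ 4 * u ^ 4 / 24) atTop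
      (𝓝 (u ^ 4 / 24)) := by
    simpa using ((tendsto_aeval_touchard_div_pow 4).mul_const (u ^ 4)).div_const 24
  exact tendsto_of_abs_sub_le_div_atTop hmain tendsto_exp_half_atTop
    (eventually_atTop.2 ⟨1, fun R hR => abs_exp_mul_logModulusError_sub_le hR u⟩)

lemma tendsto_exp_mul_saddlePhase (u : ℝ) :
    Tendsto (fun R => exp (R / 2) * saddlePhase R (saddleAngle R u)) atTop
      (𝓝 (-(u ^ 3 / 6))) := by
  have hmain : Tendsto (fun R : ℝ => u / R - aeval R (touchard 3) / R ^ 3 * u ^ 3 / 6) atTop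
      (𝓝 (-(u ^ 3 / 6))) := by
    simpa using (tendsto_const_nhds.div_atTop tendsto_id).sub
      (((tendsto_aeval_touchard_div_pow 3).mul_const (u ^ 3)).div_const 6)
  exact tendsto_of_abs_sub_le_div_atTop hmain tendsto_exp_half_atTop
    (eventually_atTop.2 ⟨1, fun R hR => abs_exp_mul_saddlePhase_sub_le hR u⟩)

lemma tendsto_one_add_one_div_atTop : Tendsto (fun R : ℝ => 1 + 1 / R) atTop (𝓝 1) := by
  simpa using tendsto_inv_atTop_zero.const_add (1 : ℝ)

lemma tendsto_exp_mul_saddleIntegrand_sub_saddleGaussian (u : ℝ) :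
    Tendsto (fun R => exp R * (saddleIntegrand R (saddleAngle R u) - saddleGaussian R u)) atTop
      (𝓝 ((u ^ 4 / 24 - u ^ 6 / 72) * exp (-u ^ 2 / 2))) := by
  have hgauss : Tendsto (fun R => saddleGaussian R u) atTop (𝓝 (exp (-u ^ 2 / 2))) := by
    simpa [saddleGaussian, neg_div] using
      ((tendsto_one_add_one_div_atTop.mul_const (u ^ 2)).div_const 2).neg.rexp
  have hratio := tendsto_sq_mul_exp_mul_cos_sub_one tendsto_exp_half_atTop
    ((tendsto_exp_mul_logModulusError u).congr fun R => by rw [exp_eq_exp_half_sq R])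
    (tendsto_exp_mul_saddlePhase u)
  convert! hratio.mul hgauss using 2 with R
  · rw [saddleIntegrand_saddleAngle, exp_eq_exp_half_sq R]
    ring
  · ring

lemma saddleGaussian_le {R : ℝ} (hR : 0 < R) (u : ℝ) : saddleGaussian R u ≤ exp (-u ^ 2 / 2) := by
  have : 0 ≤ 1 / R * u ^ 2 := by positivity
  rw [saddleGaussian, exp_le_exp]
  linarith

lemma abs_logModulusError_le_sq_div_four {R u : ℝ} (hR : 1 ≤ R) (hu : |u| ≤ exp (R / 2) / 2) :
    |logModulusError R u| ≤ u ^ 2 / 4 := by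
  have hu_sq : u ^ 2 ≤ exp R / 4 := by
    calc u ^ 2 = |u| ^ 2 := (sq_abs u).symm
      _ ≤ (exp (R / 2) / 2) ^ 2 := by gcongr
      _ = exp R / 4 := by rw [exp_eq_exp_half_sq R]; ring
  refine le_of_mul_le_mul_left ?_ (exp_pos R)
  calc exp R * |logModulusError R u| ≤ 5 / 8 * u ^ 4 := exp_mul_abs_logModulusError_le hR u
    _ ≤ u ^ 2 * u ^ 2 := by nlinarith [sq_nonneg (u ^ 2)]
    _ ≤ u ^ 2 * (exp R / 4) := by gcongr
    _ = exp R * (u ^ 2 / 4) := by ring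

lemma exp_mul_sq_saddlePhase_le {R : ℝ} (hR : 1 ≤ R) (u : ℝ) :
    exp R * saddlePhase R (saddleAngle R u) ^ 2 ≤ 2 * (u ^ 2 + u ^ 6) := by
  calc exp R * saddlePhase R (saddleAngle R u) ^ 2
      = (exp (R / 2) * |saddlePhase R (saddleAngle R u)|) ^ 2 := by
        rw [mul_pow, sq_abs, ← exp_eq_exp_half_sq]
    _ ≤ (|u| + |u| ^ 3) ^ 2 := by
        gcongr
        exact exp_mul_abs_saddlePhase_le hR u
    _ ≤ 2 * (|u| ^ 2 + (|u| ^ 3) ^ 2) := add_sq_le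
    _ = 2 * (u ^ 2 + u ^ 6) := by rw [← pow_mul, sq_abs, (show Even (3 * 2) by decide).pow_abs]

lemma exp_mul_abs_exp_mul_cos_sub_one_le {R : ℝ} (hR : 1 ≤ R) (u : ℝ) :
    exp R * |exp (logModulusError R u) * cos (saddlePhase R (saddleAngle R u)) - 1|
      ≤ (u ^ 2 + u ^ 4 + u ^ 6) * exp |logModulusError R u| := by
  set x := logModulusError R u
  set y := saddlePhase R (saddleAngle R u)
  have hx : exp R * |x| ≤ 5 / 8 * u ^ 4 := exp_mul_abs_logModulusError_le hR u
  have hy : exp R * y ^ 2 ≤ 2 * (u ^ 2 + u ^ 6) := exp_mul_sq_saddlePhase_le hR u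
  have hone : 1 ≤ exp |x| := one_le_exp (abs_nonneg x)
  calc _ ≤ exp R * (|x| * exp |x| + y ^ 2 / 2) := by
        gcongr
        exact abs_exp_mul_cos_sub_one_le x y
    _ = exp R * |x| * exp |x| + exp R * y ^ 2 / 2 * 1 := by ring
    _ ≤ 5 / 8 * u ^ 4 * exp |x| + 2 * (u ^ 2 + u ^ 6) / 2 * exp |x| := by gcongr
    _ = (u ^ 2 + 5 / 8 * u ^ 4 + u ^ 6) * exp |x| := by ring
    _ ≤ (u ^ 2 + 1 * u ^ 4 + u ^ 6) * exp |x| := by gcongr; norm_num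
    _ = _ := by rw [one_mul]

lemma exp_mul_abs_saddleIntegrand_sub_saddleGaussian_le {R u : ℝ} (hR : 1 ≤ R)
    (hu : |u| ≤ exp (R / 2) / 2) :
    exp R * |saddleIntegrand R (saddleAngle R u) - saddleGaussian R u|
      ≤ (u ^ 2 + u ^ 4 + u ^ 6) * exp (-(1 / 4) * u ^ 2) := by
  have hgauss₀ : 0 ≤ saddleGaussian R u := exp_nonneg _
  have hgauss : saddleGaussian R u * exp |logModulusError R u| ≤ exp (-(1 / 4) * u ^ 2) := by
    calc _ ≤ exp (-u ^ 2 / 2) * exp (u ^ 2 / 4) := by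
          gcongr
          · exact saddleGaussian_le (by linarith) u
          · exact abs_logModulusError_le_sq_div_four hR hu
      _ = _ := by rw [← exp_add]; congr 1; ring
  rw [saddleIntegrand_saddleAngle, ← mul_sub_one, abs_mul, abs_of_nonneg hgauss₀, mul_left_comm]
  calc _ ≤ saddleGaussian R u * ((u ^ 2 + u ^ 4 + u ^ 6) * exp |logModulusError R u|) :=
        mul_le_mul_of_nonneg_left (exp_mul_abs_exp_mul_cos_sub_one_le hR u) hgauss₀
    _ = (u ^ 2 + u ^ 4 + u ^ 6) * (saddleGaussian R u * exp |logModulusError R u|) := by ring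
    _ ≤ _ := by gcongr

/-! ### The central arc -/

/-- The saddle integrand in the rescaled coordinate, cut off to the arc `|θ| ≤ 1/(2R)`, where
Taylor's inequality keeps it below a fixed Gaussian. -/
noncomputable def centralIntegrand (R : ℝ) : ℝ → ℝ :=
  (Set.Ioc (-(exp (R / 2) / 2)) (exp (R / 2) / 2)).indicator
    fun u => saddleIntegrand R (saddleAngle R u)

lemma continuous_saddleIntegrand_saddleAngle (R : ℝ) :
    Continuous fun u => saddleIntegrand R (saddleAngle R u) :=
  (continuous_saddleIntegrand R).comp (continuous_id.div_const _)

lemma integrable_centralIntegrand (R : ℝ) : Integrable (centralIntegrand R) :=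
  (continuous_saddleIntegrand_saddleAngle R).integrableOn_Ioc.integrable_indicator
    measurableSet_Ioc

lemma integral_centralIntegrand {R : ℝ} (hR : 0 < R) :
    ∫ u, centralIntegrand R u
      = R * exp (R / 2) * ∫ θ in -(1 / (2 * R))..1 / (2 * R), saddleIntegrand R θ := by
  have hle : -(exp (R / 2) / 2) ≤ exp (R / 2) / 2 := by linarith [exp_pos (R / 2)]
  simp only [centralIntegrand, saddleAngle]
  rw [integral_indicator measurableSet_Ioc, ← intervalIntegral.integral_of_le hle,
    intervalIntegral.integral_comp_div _ (by positivity), smul_eq_mul]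
  congr 2 <;> field_simp

lemma saddleGaussian_eq (R : ℝ) :
    saddleGaussian R = fun u => exp (-((1 + 1 / R) / 2) * u ^ 2) := by
  funext u
  rw [saddleGaussian]
  congr 1
  ring

lemma integrable_saddleGaussian {R : ℝ} (hR : 0 < R) : Integrable (saddleGaussian R) := by
  rw [saddleGaussian_eq]
  exact integrable_exp_neg_mul_sq (by positivity)

lemma integral_saddleGaussian (R : ℝ) :
    ∫ u, saddleGaussian R u = √(2 * π) / √(1 + 1 / R) := by
  rw [saddleGaussian_eq, integral_gaussian, ← sqrt_div (by positivity)]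
  congr 1
  rw [div_div_eq_mul_div, mul_comm]

lemma norm_exp_mul_centralIntegrand_sub_saddleGaussian_le {R : ℝ} (hR : 1 ≤ R) (u : ℝ) :
    ‖exp R * (centralIntegrand R u - saddleGaussian R u)‖
      ≤ 4 * (u ^ 2 + u ^ 4 + u ^ 6) * exp (-(1 / 4) * u ^ 2) := by
  rw [norm_mul, norm_eq_abs, norm_eq_abs, abs_exp]
  by_cases hu : u ∈ Set.Ioc (-(exp (R / 2) / 2)) (exp (R / 2) / 2)
  · rw [centralIntegrand, Set.indicator_of_mem hu]
    refine (exp_mul_abs_saddleIntegrand_sub_saddleGaussian_le hR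
      (abs_le.2 ⟨hu.1.le, hu.2⟩)).trans ?_
    gcongr
    linarith [show 0 ≤ u ^ 2 + u ^ 4 + u ^ 6 by positivity]
  · have hlarge : exp (R / 2) / 2 ≤ |u| := by
      rw [Set.mem_Ioc, not_and_or, not_lt, not_le] at hu
      exact hu.elim (fun h => le_abs.2 (.inr (le_neg_of_le_neg h))) fun h => le_abs.2 (.inl h.le)
    rw [centralIntegrand, Set.indicator_of_notMem hu, zero_sub, abs_neg]
    have hexp : exp R ≤ 4 * u ^ 2 := by
      calc exp R = 4 * (exp (R / 2) / 2) ^ 2 := by rw [exp_eq_exp_half_sq R]; ring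
        _ ≤ 4 * |u| ^ 2 := by gcongr
        _ = 4 * u ^ 2 := by rw [sq_abs]
    have hgauss : |saddleGaussian R u| ≤ exp (-(1 / 4) * u ^ 2) := by
      rw [saddleGaussian, abs_exp]
      refine (saddleGaussian_le (by linarith) u).trans (exp_le_exp.2 ?_)
      linarith [sq_nonneg u]
    refine (mul_le_mul hexp hgauss (abs_nonneg _) (by positivity)).trans ?_
    gcongr
    linarith [show 0 ≤ u ^ 4 + u ^ 6 by positivity]

lemma tendsto_exp_mul_centralIntegrand_sub_saddleGaussian (u : ℝ) :
    Tendsto (fun R => exp R * (centralIntegrand R u - saddleGaussian R u)) atTop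
      (𝓝 ((u ^ 4 / 24 - u ^ 6 / 72) * exp (-u ^ 2 / 2))) := by
  refine (tendsto_exp_mul_saddleIntegrand_sub_saddleGaussian u).congr' ?_
  filter_upwards [tendsto_exp_half_atTop.eventually_gt_atTop (2 * |u|)] with R hR
  have hu := abs_lt.1 (show |u| < exp (R / 2) / 2 by linarith)
  rw [centralIntegrand, Set.indicator_of_mem (Set.mem_Ioc.2 ⟨hu.1, hu.2.le⟩)]

lemma integral_quartic_sub_sextic_mul_exp_neg_sq_div_two :
    ∫ u : ℝ, (u ^ 4 / 24 - u ^ 6 / 72) * exp (-u ^ 2 / 2) = -1 / 12 * √(2 * π) := by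
  have hInt (k : ℕ) : Integrable fun u : ℝ => u ^ k * exp (-u ^ 2 / 2) := by
    convert! integrable_pow_mul_exp_neg_mul_sq k (b := 1 / 2) (by norm_num) using 4
    ring
  have h₄ : ∫ u : ℝ, u ^ 4 * exp (-u ^ 2 / 2) = 3 * √(2 * π) := by
    simpa [Nat.doubleFactorial] using integral_pow_two_mul_mul_exp_neg_sq_div_two 2
  have h₆ : ∫ u : ℝ, u ^ 6 * exp (-u ^ 2 / 2) = 15 * √(2 * π) := by
    simpa [Nat.doubleFactorial] using integral_pow_two_mul_mul_exp_neg_sq_div_two 3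
  calc _ = ∫ u : ℝ, (1 / 24 * (u ^ 4 * exp (-u ^ 2 / 2)) - 1 / 72 * (u ^ 6 * exp (-u ^ 2 / 2))) :=
        integral_congr_ae (.of_forall fun u => by ring)
    _ = 1 / 24 * (3 * √(2 * π)) - 1 / 72 * (15 * √(2 * π)) := by
        rw [integral_sub ((hInt 4).const_mul _) ((hInt 6).const_mul _), integral_const_mul,
          integral_const_mul, h₄, h₆]
    _ = _ := by ring

lemma tendsto_exp_mul_central_integral_sub :
    Tendsto (fun R => exp R * (R * exp (R / 2) *
        (∫ θ in -(1 / (2 * R))..1 / (2 * R), saddleIntegrand R θ) - √(2 * π) / √(1 + 1 / R)))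
      atTop (𝓝 (-1 / 12 * √(2 * π))) := by
  have hdom : Integrable fun u : ℝ =>
      4 * (u ^ 2 + u ^ 4 + u ^ 6) * exp (-(1 / 4) * u ^ 2) := by
    have hInt (k : ℕ) := integrable_pow_mul_exp_neg_mul_sq k (b := 1 / 4) (by norm_num)
    convert! (((hInt 2).add (hInt 4)).add (hInt 6)).const_mul 4 using 2 with u
    simp only [Pi.add_apply]
    ring
  rw [← integral_quartic_sub_sextic_mul_exp_neg_sq_div_two]
  refine (tendsto_integral_filter_of_dominated_convergence _ ?_
    (eventually_atTop.2 ⟨1, fun R hR =>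
      .of_forall (norm_exp_mul_centralIntegrand_sub_saddleGaussian_le hR)⟩) hdom
    (.of_forall tendsto_exp_mul_centralIntegrand_sub_saddleGaussian)).congr' ?_
  · filter_upwards [eventually_gt_atTop 0] with R hR
    exact (((integrable_centralIntegrand R).sub
      (integrable_saddleGaussian hR)).const_mul _).aestronglyMeasurable
  · filter_upwards [eventually_gt_atTop 0] with R hR
    rw [integral_const_mul, integral_sub (integrable_centralIntegrand R)
      (integrable_saddleGaussian hR), integral_centralIntegrand hR, integral_saddleGaussian]

/-! ### The outer arc -/

lemma abs_saddleIntegrand_le (R θ : ℝ) :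
    |saddleIntegrand R θ| ≤ exp (exp R * ((poissonCharFun R θ).re - 1)) := by
  rw [saddleIntegrand, abs_mul, abs_exp]
  exact mul_le_of_le_one_right (exp_nonneg _) (abs_cos_le_one _)

lemma re_poissonCharFun_sub_one_le {R θ : ℝ} (hR : 1 ≤ R) (hθ : 1 / (2 * R) ≤ |θ|)
    (hθπ : |θ| ≤ π) : (poissonCharFun R θ).re - 1 ≤ -(1 / (21 * R)) := by
  have : 0 < R := by linarith
  have hcos : R * (cos θ - 1) ≤ -(1 / (20 * R)) := by
    have hπ : π ^ 2 ≤ 10 := by nlinarith [pi_lt_d2, pi_pos]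
    calc R * (cos θ - 1) ≤ R * -(2 / π ^ 2 * |θ| ^ 2) := by
          gcongr
          rw [sq_abs]
          linarith [cos_le_one_sub_mul_cos_sq hθπ]
      _ ≤ R * -(2 / 10 * (1 / (2 * R)) ^ 2) := by gcongr
      _ = -(1 / (20 * R)) := by field_simp; norm_num
  calc (poissonCharFun R θ).re - 1 ≤ exp (R * (cos θ - 1)) - 1 :=
        sub_le_sub_right ((Complex.re_le_norm _).trans_eq (norm_poissonCharFun R θ)) 1
    _ ≤ exp (-(1 / (20 * R))) - 1 := by gcongr
    _ ≤ (1 / (20 * R) + 1)⁻¹ - 1 := by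
        rw [exp_neg]
        gcongr
        exact add_one_le_exp _
    _ = -(1 / (20 * R + 1)) := by field_simp; ring
    _ ≤ -(1 / (21 * R)) := by
        gcongr
        linarith

lemma abs_integral_saddleIntegrand_sub_le {R : ℝ} (hR : 1 ≤ R) :
    |(∫ θ in -π..π, saddleIntegrand R θ)
        - ∫ θ in -(1 / (2 * R))..1 / (2 * R), saddleIntegrand R θ|
      ≤ 2 * π * exp (-(exp R / (21 * R))) := by
  have : 0 < R := by linarith
  have hπ : 1 / (2 * R) ≤ π := by
    rw [div_le_iff₀ (by positivity)]
    nlinarith [pi_gt_three]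
  have houter (θ : ℝ) (hθ : 1 / (2 * R) ≤ |θ|) (hθπ : |θ| ≤ π) :
      ‖saddleIntegrand R θ‖ ≤ exp (-(exp R / (21 * R))) := by
    refine (abs_saddleIntegrand_le R θ).trans (exp_le_exp.2 ?_)
    rw [← mul_one_div, ← mul_neg]
    gcongr
    exact re_poissonCharFun_sub_one_le hR hθ hθπ
  refine (norm_integral_sub_integral_le_of_norm_le (continuous_saddleIntegrand R) (by positivity)
    hπ houter).trans ?_
  gcongr
  linarith [show 0 ≤ 1 / (2 * R) by positivity]

lemma eventually_le_exp_div : ∀ᶠ R in atTop, 4 * R ≤ exp R / (21 * R) := by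
  have hsmall := (tendsto_pow_mul_exp_neg_atTop_nhds_zero 2).eventually_le_const
    (show (0 : ℝ) < 1 / 84 by norm_num)
  filter_upwards [hsmall, eventually_gt_atTop 0] with R hR hR₀
  rw [exp_neg, ← div_eq_mul_inv, div_le_iff₀ (exp_pos R)] at hR
  rw [le_div_iff₀ (by positivity)]
  linarith

lemma tendsto_exp_mul_outer_integral :
    Tendsto (fun R => exp R * (R * exp (R / 2) * ((∫ θ in -π..π, saddleIntegrand R θ)
        - ∫ θ in -(1 / (2 * R))..1 / (2 * R), saddleIntegrand R θ))) atTop (𝓝 0) := by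
  have hbound : Tendsto (fun R : ℝ => 2 * π * (R ^ 1 * exp (-R))) atTop (𝓝 0) := by
    simpa using (tendsto_pow_mul_exp_neg_atTop_nhds_zero 1).const_mul (2 * π)
  refine squeeze_zero_norm' ?_ hbound
  filter_upwards [eventually_le_exp_div, eventually_ge_atTop 1] with R hexp hR
  have : 0 < R := by linarith
  rw [norm_mul, norm_mul, norm_of_nonneg (exp_nonneg R),
    norm_of_nonneg (by positivity : 0 ≤ R * exp (R / 2))]
  calc _ ≤ exp R * (R * exp (R / 2) * (2 * π * exp (-(exp R / (21 * R))))) := by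
        gcongr
        exact abs_integral_saddleIntegrand_sub_le hR
    _ ≤ exp R * (R * exp R * (2 * π * exp (-(4 * R)))) := by
        gcongr
        linarith
    _ ≤ exp R * (R * exp R * (2 * π * exp (-(3 * R)))) := by
        gcongr
        linarith
    _ = 2 * π * (R ^ 1 * (exp R * exp R * exp (-(3 * R)))) := by ring
    _ = 2 * π * (R ^ 1 * exp (-R)) := by
        rw [← exp_add, ← exp_add]
        congr 3
        ring

/-- Cauchy's integral for `B_n` divided by its saddle-point approximation `E_n`, as a function of
`R = W(n + 1)`. -/
noncomputable def saddleRatio (R : ℝ) : ℝ :=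
  √(1 + 1 / R) * (R * exp (R / 2)) / √(2 * π) * ∫ θ in -π..π, saddleIntegrand R θ

lemma tendsto_exp_mul_saddleRatio_sub_one :
    Tendsto (fun R => exp R * (saddleRatio R - 1)) atTop (𝓝 (-1 / 12)) := by
  have hsqrt : Tendsto (fun R : ℝ => √(1 + 1 / R) / √(2 * π)) atTop (𝓝 (1 / √(2 * π))) := by
    simpa using tendsto_one_add_one_div_atTop.sqrt.div_const √(2 * π)
  have h2π : √(2 * π) ≠ 0 := by positivity
  have h := hsqrt.mul (tendsto_exp_mul_central_integral_sub.add tendsto_exp_mul_outer_integral)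
  rw [add_zero, one_div_mul_eq_div, mul_div_cancel_right₀ _ h2π] at h
  refine h.congr' ?_
  filter_upwards [eventually_gt_atTop 0] with R hR
  have : √(1 + 1 / R) ≠ 0 := by positivity
  rw [saddleRatio]
  field_simp
  ring

/-! ### The Lambert W function -/

lemma lambertW_mul_exp {x : ℝ} (hx : 0 ≤ x) : lambertW x * exp (lambertW x) = x := by
  have hcont : ContinuousOn (fun y : ℝ => y * exp y) (Set.Icc 0 x) := by fun_prop
  have hle : x ≤ x * exp x := le_mul_of_one_le_right hx (one_le_exp hx)
  obtain ⟨y, -, hy⟩ := intermediate_value_Icc hx hcont ⟨by simpa using hx, hle⟩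
  exact Function.invFun_eq (f := fun y : ℝ => y * exp y) ⟨y, hy⟩

lemma lambertW_pos {x : ℝ} (hx : 0 < x) : 0 < lambertW x := by
  refine (mul_pos_iff_of_pos_right (exp_pos (lambertW x))).1 ?_
  rwa [lambertW_mul_exp hx.le]

lemma tendsto_lambertW_atTop : Tendsto lambertW atTop atTop := by
  refine tendsto_atTop.2 fun b => ?_
  filter_upwards [eventually_gt_atTop (b * exp b), eventually_gt_atTop 0] with x hx hx₀
  by_contra! hlt
  have hW := lambertW_pos hx₀
  have : lambertW x * exp (lambertW x) ≤ b * exp b :=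
    mul_le_mul hlt.le (exp_le_exp.2 hlt.le) (exp_nonneg _) (hW.le.trans hlt.le)
  linarith [lambertW_mul_exp hx₀.le]

lemma tendsto_log_div_lambertW : Tendsto (fun x => log x / lambertW x) atTop (𝓝 1) := by
  have hlog := isLittleO_log_id_atTop.tendsto_div_nhds_zero.comp tendsto_lambertW_atTop
  have h := hlog.add_const 1
  rw [zero_add] at h
  refine h.congr' ?_
  filter_upwards [eventually_gt_atTop 0] with x hx
  have hW := lambertW_pos hx
  have hlog_eq : log x = log (lambertW x) + lambertW x := by
    conv_lhs => rw [← lambertW_mul_exp hx.le, log_mul hW.ne' (exp_ne_zero _), log_exp]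
  simp only [Function.comp_apply, id, hlog_eq, add_div, div_self hW.ne']

lemma tendsto_natCast_add_one_atTop : Tendsto (fun n : ℕ => (n : ℝ) + 1) atTop atTop :=
  tendsto_atTop_add_const_right _ 1 tendsto_natCast_atTop_atTop

lemma tendsto_log_nat_add_one_div_log :
    Tendsto (fun n : ℕ => log (n + 1) / log n) atTop (𝓝 1) := by
  have hlog : Tendsto (fun n : ℕ => log n) atTop atTop :=
    tendsto_log_atTop.comp tendsto_natCast_atTop_atTop
  have h := (tendsto_log_nat_add_one_sub_log.div_atTop hlog).add_const 1
  rw [zero_add] at h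
  refine h.congr' ?_
  filter_upwards [hlog.eventually_gt_atTop 0] with n hn
  field_simp
  ring

lemma tendsto_lambertW_nat_add_one_div_log :
    Tendsto (fun n : ℕ => lambertW (n + 1) / log n) atTop (𝓝 1) := by
  have h := tendsto_log_nat_add_one_div_log.div
    (tendsto_log_div_lambertW.comp tendsto_natCast_add_one_atTop) one_ne_zero
  rw [div_one] at h
  refine h.congr' ?_
  filter_upwards [eventually_gt_atTop 0] with n hn
  have hlog : log (n + 1) ≠ 0 := (log_pos (by simpa using hn)).ne'
  simp only [Function.comp_apply, Pi.div_apply]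
  field_simp

/-! ### The asymptotic expansion -/

lemma sqrt_two_pi_mul_mul_exp_mul_add_one {R : ℝ} (hR : 0 < R) :
    √(2 * π * (R * exp R) * (R + 1)) = √(2 * π) * (√(1 + 1 / R) * (R * exp (R / 2))) := by
  rw [← sqrt_sq (show 0 ≤ R * exp (R / 2) by positivity), ← sqrt_mul (by positivity),
    ← sqrt_mul (by positivity), mul_pow, ← exp_eq_exp_half_sq]
  congr 1
  field_simp

lemma Bell_div_E (n : ℕ) : (Bell n : ℝ) / E n = saddleRatio (lambertW (n + 1)) := by
  have hR : 0 < lambertW (n + 1) := lambertW_pos (by positivity)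
  have hW : lambertW (n + 1) * exp (lambertW (n + 1)) = n + 1 := lambertW_mul_exp (by positivity)
  have hsqrt := sqrt_two_pi_mul_mul_exp_mul_add_one hR
  rw [hW] at hsqrt
  have h2π : √(2 * π) / (2 * π) = 1 / √(2 * π) := sqrt_div_self'
  rw [E, Bell_eq_integral_saddleIntegrand hR hW, hsqrt, saddleRatio]
  generalize lambertW (n + 1) = R at *
  calc _ = √(1 + 1 / R) * (R * exp (R / 2)) * (√(2 * π) / (2 * π))
          * ∫ θ in -π..π, saddleIntegrand R θ := by field_simp
    _ = _ := by rw [h2π, mul_one_div]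

theorem stmt_4 :
    Filter.Tendsto (fun n : ℕ => ((n : ℝ) / Real.log n) * ((Bell n : ℝ) / E n - 1))
      Filter.atTop (nhds (-1 / 12)) := by
  have hratio := tendsto_exp_mul_saddleRatio_sub_one.comp
    (tendsto_lambertW_atTop.comp tendsto_natCast_add_one_atTop)
  have h := (tendsto_natCast_div_add_atTop (1 : ℝ)).mul
    (tendsto_lambertW_nat_add_one_div_log.mul hratio)
  rw [one_mul, one_mul] at h
  refine h.congr fun n => ?_
  have hW : lambertW (n + 1) * exp (lambertW (n + 1)) = n + 1 := lambertW_mul_exp (by positivity)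
  rw [Bell_div_E]
  calc _ = n / (n + 1) * (lambertW (n + 1) * exp (lambertW (n + 1))) / log n
          * (saddleRatio (lambertW (n + 1)) - 1) := by
        simp only [Function.comp_apply]
        ring
    _ = _ := by rw [hW, div_mul_cancel₀ _ (by positivity)]
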